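/- Let G = (V, E, τ) be a graph on n vertices with no isolated vertices and with τ(v) ≤ d_v for every v, and let k_c, k_s, ℓ ∈ ℕ with ℓ > k_s ≥ k_c. Let H be the graph constructed from G and ℓ, with X and Y its target sets of size ℓ. Then: (Completeness) if opt(G) ≤ k_c, then opt_H(X ⇝ Y) ≤ k_c + ℓ; and (Soundness) if opt(G) > k_s, then opt_H(X ⇝ Y) > k_s + ℓ. -/

import Mathlib

namespace TSS

variable {V : Type*}

/-- The set of active vertices after `i` steps of the activation process started from `S`. -/
def activeAt (G : SimpleGraph V) (τ : V → ℕ) (S : Set V) : ℕ → Set V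
  | 0 => S
  | i + 1 => activeAt G τ S i ∪ { v | τ v ≤ (G.neighborSet v ∩ activeAt G τ S i).ncard }

/-- The active vertex set `𝒜(S) = ⋃ i, 𝒜ⁱ(S)`. -/
def activeSet (G : SimpleGraph V) (τ : V → ℕ) (S : Set V) : Set V :=
  ⋃ i, activeAt G τ S i

/-- `S` is a target set for `(G, τ)` if it activates every vertex. -/
def IsTargetSet (G : SimpleGraph V) (τ : V → ℕ) (S : Set V) : Prop :=
  activeSet G τ S = Set.univ

/-- Minimum size of a target set. -/
noncomputable def optTS (G : SimpleGraph V) (τ : V → ℕ) : ℕ :=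
  sInf { m | ∃ S : Set V, IsTargetSet G τ S ∧ S.ncard = m }

/-- A reconfiguration sequence `Sfam 0 = X, …, Sfam T = Y` of target sets where
consecutive sets differ in exactly one vertex. -/
structure IsReconfSeq (G : SimpleGraph V) (τ : V → ℕ) (X Y : Set V) (T : ℕ)
    (Sfam : ℕ → Set V) : Prop where
  head : Sfam 0 = X
  last : Sfam T = Y
  target : ∀ t ≤ T, IsTargetSet G τ (Sfam t)
  step : ∀ t < T, (symmDiff (Sfam t) (Sfam (t + 1))).ncard = 1

/-- The size of a reconfiguration sequence: maximum cardinality of any member. -/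
noncomputable def seqSize (T : ℕ) (Sfam : ℕ → Set V) : ℕ :=
  (Finset.range (T + 1)).sup fun t => (Sfam t).ncard

/-- `opt_G(X ⇝ Y)`: minimum size over all reconfiguration sequences from `X` to `Y`. -/
noncomputable def optReconf (G : SimpleGraph V) (τ : V → ℕ) (X Y : Set V) : ℕ :=
  sInf { m | ∃ T Sfam, IsReconfSeq G τ X Y T Sfam ∧ seqSize T Sfam = m }

/-- The four internal vertices of a one-way gadget. -/
inductive GadVert where | t | h | b1 | b2

/-- Index set of the one-way gadgets of the graph `H` built from `G` (with degree
function `d`) and `ℓ`. -/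
inductive GadIdx (V : Type*) (ℓ : ℕ) (d : V → ℕ) where
  | vx (v : V) (i : Fin ℓ)
  | xa (i : Fin ℓ) (v : V) (j : Fin (d v))
  | av (v : V) (j : Fin (d v))
  | vy (v : V) (i : Fin ℓ)
  | yb (i : Fin ℓ) (v : V) (j : Fin (d v))
  | bv (v : V) (j : Fin (d v))

/-- Vertices of the graph `H`: a copy of `V`, the sets `X`, `Y`, `A`, `B`, and the
internal vertices of all one-way gadgets. -/
inductive HVert (V : Type*) (ℓ : ℕ) (d : V → ℕ) where
  | orig (v : V)
  | xx (i : Fin ℓ)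
  | yy (i : Fin ℓ)
  | aa (v : V) (j : Fin (d v))
  | bb (v : V) (j : Fin (d v))
  | gad (D : GadIdx V ℓ d) (w : GadVert)

variable {ℓ : ℕ} {d : V → ℕ}

/-- The tail of a one-way gadget. -/
def gadTail : GadIdx V ℓ d → HVert V ℓ d
  | .vx v _ => .orig v
  | .xa i _ _ => .xx i
  | .av v j => .aa v j
  | .vy v _ => .orig v
  | .yb i _ _ => .yy i
  | .bv v j => .bb v j

/-- The head of a one-way gadget. -/
def gadHead : GadIdx V ℓ d → HVert V ℓ d
  | .vx _ i => .xx i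
  | .xa _ v j => .aa v j
  | .av v _ => .orig v
  | .vy _ i => .yy i
  | .yb _ v j => .bb v j
  | .bv v _ => .orig v

/-- Base edge relation of the graph `H`. -/
def HRel (G : SimpleGraph V) (ℓ : ℕ) (d : V → ℕ) : HVert V ℓ d → HVert V ℓ d → Prop :=
  fun p q =>
    (∃ u v, G.Adj u v ∧ p = .orig u ∧ q = .orig v) ∨
    (∃ D, p = .gad D .t ∧ (q = .gad D .b1 ∨ q = .gad D .b2)) ∨
    (∃ D, p = .gad D .h ∧ (q = .gad D .b1 ∨ q = .gad D .b2)) ∨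
    (∃ D, p = gadTail D ∧ q = .gad D .t) ∨
    (∃ D, p = gadHead D ∧ q = .gad D .h)

/-- The graph `H` constructed from `G` (with degree function `d`) and `ℓ`. -/
def graphH (G : SimpleGraph V) (ℓ : ℕ) (d : V → ℕ) : SimpleGraph (HVert V ℓ d) :=
  SimpleGraph.fromRel (HRel G ℓ d)

/-- The threshold function `τ'` of `H`, where `n` is the number of vertices of `G`. -/
def tauH (τ : V → ℕ) (n ℓ : ℕ) (d : V → ℕ) : HVert V ℓ d → ℕ
  | .orig v => τ v
  | .xx _ => n
  | .yy _ => n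
  | .aa _ _ => ℓ
  | .bb _ _ => ℓ
  | .gad _ .t => 1
  | .gad _ .b1 => 1
  | .gad _ .b2 => 1
  | .gad _ .h => 2

/-- The vertex set `X = {x₁, …, x_ℓ}` of `H`. -/
def XSet (V : Type*) (ℓ : ℕ) (d : V → ℕ) : Set (HVert V ℓ d) := Set.range HVert.xx

/-- The vertex set `Y = {y₁, …, y_ℓ}` of `H`. -/
def YSet (V : Type*) (ℓ : ℕ) (d : V → ℕ) : Set (HVert V ℓ d) := Set.range HVert.yy

/-- The copy of `V` inside `V(H)`. -/
def OrigSet (V : Type*) (ℓ : ℕ) (d : V → ℕ) : Set (HVert V ℓ d) := Set.range HVert.orig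

/-- The vertex set `A = {a_{v,j}}` of `H`. -/
def ASet (V : Type*) (ℓ : ℕ) (d : V → ℕ) : Set (HVert V ℓ d) :=
  { p | ∃ v j, p = HVert.aa v j }

/-- The vertex set `B = {b_{v,j}}` of `H`. -/
def BSet (V : Type*) (ℓ : ℕ) (d : V → ℕ) : Set (HVert V ℓ d) :=
  { p | ∃ v j, p = HVert.bb v j }

end TSS

namespace TSS

def ClosedUnder {U : Type*} (H : SimpleGraph U) (σ : U → ℕ) (C : Set U) : Prop :=
  ∀ v, σ v ≤ (H.neighborSet v ∩ C).ncard → v ∈ C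

theorem activeAt_mono {U : Type*} (H : SimpleGraph U) (σ : U → ℕ) (S : Set U) :
    Monotone (activeAt H σ S) :=
  monotone_nat_of_le_succ fun i => by
    intro x hx
    exact Or.inl hx

theorem isTargetSet_iff {U : Type*} [Finite U] (H : SimpleGraph U) (σ : U → ℕ) (S : Set U) :
    IsTargetSet H σ S ↔ ∀ C, S ⊆ C → ClosedUnder H σ C → ∀ v, v ∈ C := by
  constructor
  · intro h C hS hC v
    have key : ∀ i, activeAt H σ S i ⊆ C := by
      intro i
      induction i with
      | zero => exact hS
      | succ i ih =>
        rintro x (hx | hx)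
        · exact ih hx
        · apply hC
          refine le_trans hx (Set.ncard_le_ncard (Set.inter_subset_inter_right _ ih) (Set.toFinite _))
    have hv : v ∈ activeSet H σ S := by rw [h]; trivial
    obtain ⟨i, hi⟩ := Set.mem_iUnion.1 hv
    exact key i hi
  · intro h
    apply Set.eq_univ_of_forall
    apply h
    · intro x hx
      exact Set.mem_iUnion.2 ⟨0, hx⟩
    · intro v hv
      have : ∃ i, H.neighborSet v ∩ activeSet H σ S ⊆ activeAt H σ S i := by
        have h1 : ∀ u : U, ∃ i, u ∈ activeSet H σ S → u ∈ activeAt H σ S i := by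
          intro u
          by_cases hu : u ∈ activeSet H σ S
          · obtain ⟨i, hi⟩ := Set.mem_iUnion.1 hu
            exact ⟨i, fun _ => hi⟩
          · exact ⟨0, fun h => absurd h hu⟩
        choose g hg using h1
        obtain ⟨M, hM⟩ := (Set.finite_range g).bddAbove
        exact ⟨M, fun u hu => activeAt_mono H σ S (hM ⟨u, rfl⟩) (hg u hu.2)⟩
      obtain ⟨i, hi⟩ := this
      refine Set.mem_iUnion.2 ⟨i + 1, Or.inr ?_⟩
      refine le_trans hv (Set.ncard_le_ncard (fun u hu => ⟨hu.1, hi hu⟩) (Set.toFinite _))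

theorem IsTargetSet.mono {U : Type*} [Finite U] {H : SimpleGraph U} {σ : U → ℕ} {S S' : Set U}
    (h : IsTargetSet H σ S) (hs : S ⊆ S') : IsTargetSet H σ S' := by
  rw [isTargetSet_iff] at h ⊢
  exact fun C hC => h C (hs.trans hC)

theorem ClosedUnder.mem {U : Type*} [Finite U] {H : SimpleGraph U} {σ : U → ℕ} {C : Set U}
    (hC : ClosedUnder H σ C) {ι : Type*} [Finite ι] (v : U) (g : ι → U)
    (hg : Function.Injective g) (hm : ∀ i, g i ∈ C) (ha : ∀ i, H.Adj v (g i))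
    (hc : σ v ≤ Nat.card ι) : v ∈ C := by
  apply hC
  refine hc.trans ?_
  rw [← Set.ncard_range_of_injective hg]
  apply Set.ncard_le_ncard _ (Set.toFinite _)
  rintro _ ⟨i, rfl⟩
  exact ⟨ha i, hm i⟩

def RStep {U : Type*} (H : SimpleGraph U) (σ : U → ℕ) (k : ℕ) (A B : Set U) : Prop :=
  IsTargetSet H σ A ∧ IsTargetSet H σ B ∧ A.ncard ≤ k ∧ B.ncard ≤ k ∧ (symmDiff A B).ncard = 1

theorem RStep.symm {U : Type*} {H : SimpleGraph U} {σ : U → ℕ} {k : ℕ} {A B : Set U}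
    (h : RStep H σ k A B) : RStep H σ k B A :=
  ⟨h.2.1, h.1, h.2.2.2.1, h.2.2.1, by rw [symmDiff_comm]; exact h.2.2.2.2⟩

theorem reach_up {U : Type*} [Finite U] {H : SimpleGraph U} {σ : U → ℕ} {k : ℕ} (A : Set U)
    (hA : IsTargetSet H σ A) (n : ℕ) : ∀ B : Set U, A ⊆ B → B.ncard ≤ k → (B \ A).ncard = n →
    Relation.ReflTransGen (RStep H σ k) A B := by
  induction n with
  | zero =>
    intro B hAB hB h0
    rw [Set.ncard_eq_zero (Set.toFinite _), Set.sdiff_eq_empty] at h0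
    rw [hAB.antisymm h0]
  | succ n ih =>
    intro B hAB hB h1
    obtain ⟨x, hx⟩ : (B \ A).Nonempty := by
      rw [← Set.ncard_pos (Set.toFinite _)]; omega
    have hsub : B \ {x} ⊆ B := Set.sdiff_subset
    have hAB' : A ⊆ B \ {x} := fun y hy => ⟨hAB hy, by rintro rfl; exact hx.2 hy⟩
    have hk : (B \ {x}).ncard ≤ k := (Set.ncard_le_ncard hsub (Set.toFinite _)).trans hB
    refine Relation.ReflTransGen.tail (ih (B \ {x}) hAB' hk ?_) ⟨hA.mono hAB', hA.mono hAB, hk, hB, ?_⟩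
    · have : (B \ {x}) \ A = (B \ A) \ {x} := by ext y; simp; tauto
      rw [this, Set.ncard_sdiff_singleton_of_mem hx, h1]; rfl
    · have : symmDiff (B \ {x}) B = {x} := by
        ext y
        have := hx.1
        simp only [Set.mem_symmDiff, Set.mem_sdiff, Set.mem_singleton_iff]
        constructor
        · tauto
        · rintro rfl; tauto
      rw [this, Set.ncard_singleton]

theorem reach_seq {U : Type*} {H : SimpleGraph U} {σ : U → ℕ} {k : ℕ} {A B : Set U}
    (hA : IsTargetSet H σ A) (hk : A.ncard ≤ k)
    (h : Relation.ReflTransGen (RStep H σ k) A B) :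
    ∃ T F, IsReconfSeq H σ A B T F ∧ ∀ t ≤ T, (F t).ncard ≤ k := by
  induction h with
  | refl =>
    exact ⟨0, fun _ => A, ⟨rfl, rfl, fun _ _ => hA, fun t ht => absurd ht (by omega)⟩, fun _ _ => hk⟩
  | @tail B C _ hs ih =>
    obtain ⟨T, F, hF, hF2⟩ := ih
    refine ⟨T + 1, fun t => if t ≤ T then F t else C, ⟨?_, ?_, ?_, ?_⟩, ?_⟩
    · simpa using hF.head
    · simp
    · intro t ht
      by_cases h : t ≤ T
      · simpa [h] using hF.target t h
      · simpa [h] using hs.2.1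
    · intro t ht
      have h : t ≤ T := by omega
      by_cases h' : t + 1 ≤ T
      · simpa [h, h'] using hF.step t (by omega)
      · have : t = T := by omega
        subst this
        simpa [hF.last] using hs.2.2.2.2
    · intro t ht
      by_cases h : t ≤ T
      · simpa [h] using hF2 t h
      · simpa [h] using hs.2.2.2.1

theorem optReconf_le {U : Type*} {H : SimpleGraph U} {σ : U → ℕ} {k : ℕ} {A B : Set U} {T : ℕ}
    {F : ℕ → Set U} (hF : IsReconfSeq H σ A B T F) (h : ∀ t ≤ T, (F t).ncard ≤ k) :
    optReconf H σ A B ≤ k := by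
  have h0 : optReconf H σ A B ≤ seqSize T F := Nat.sInf_le ⟨T, F, hF, rfl⟩
  refine h0.trans ?_
  unfold seqSize
  apply Finset.sup_le
  intro t ht
  exact h t (by simpa [Nat.lt_succ_iff] using ht)

section H
variable {V : Type*} {ℓ : ℕ} {d : V → ℕ}

instance : Finite GadVert :=
  Finite.of_surjective (fun i : Fin 4 => ![GadVert.t, .h, .b1, .b2] i) (by
    rintro (_ | _ | _ | _)
    exacts [⟨0, rfl⟩, ⟨1, rfl⟩, ⟨2, rfl⟩, ⟨3, rfl⟩])

instance [Finite V] : Finite (GadIdx V ℓ d) :=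
  Finite.of_surjective
    (α := (V × Fin ℓ) ⊕ (Fin ℓ × (Σ v, Fin (d v))) ⊕ (Σ v, Fin (d v)) ⊕
      (V × Fin ℓ) ⊕ (Fin ℓ × (Σ v, Fin (d v))) ⊕ (Σ v, Fin (d v)))
    (fun
      | .inl (v, i) => .vx v i
      | .inr (.inl (i, ⟨v, j⟩)) => .xa i v j
      | .inr (.inr (.inl ⟨v, j⟩)) => .av v j
      | .inr (.inr (.inr (.inl (v, i)))) => .vy v i
      | .inr (.inr (.inr (.inr (.inl (i, ⟨v, j⟩))))) => .yb i v j
      | .inr (.inr (.inr (.inr (.inr ⟨v, j⟩)))) => .bv v j) (by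
    rintro (⟨v, i⟩ | ⟨i, v, j⟩ | ⟨v, j⟩ | ⟨v, i⟩ | ⟨i, v, j⟩ | ⟨v, j⟩)
    exacts [⟨.inl (v, i), rfl⟩, ⟨.inr (.inl (i, ⟨v, j⟩)), rfl⟩, ⟨.inr (.inr (.inl ⟨v, j⟩)), rfl⟩,
      ⟨.inr (.inr (.inr (.inl (v, i)))), rfl⟩, ⟨.inr (.inr (.inr (.inr (.inl (i, ⟨v, j⟩))))), rfl⟩,
      ⟨.inr (.inr (.inr (.inr (.inr ⟨v, j⟩)))), rfl⟩])

instance [Finite V] : Finite (HVert V ℓ d) :=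
  Finite.of_surjective
    (α := V ⊕ Fin ℓ ⊕ Fin ℓ ⊕ (Σ v, Fin (d v)) ⊕ (Σ v, Fin (d v)) ⊕ (GadIdx V ℓ d × GadVert))
    (fun
      | .inl v => .orig v
      | .inr (.inl i) => .xx i
      | .inr (.inr (.inl i)) => .yy i
      | .inr (.inr (.inr (.inl ⟨v, j⟩))) => .aa v j
      | .inr (.inr (.inr (.inr (.inl ⟨v, j⟩)))) => .bb v j
      | .inr (.inr (.inr (.inr (.inr (D, w))))) => .gad D w) (by
    rintro (v | i | i | ⟨v, j⟩ | ⟨v, j⟩ | ⟨D, w⟩)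
    exacts [⟨.inl v, rfl⟩, ⟨.inr (.inl i), rfl⟩, ⟨.inr (.inr (.inl i)), rfl⟩,
      ⟨.inr (.inr (.inr (.inl ⟨v, j⟩))), rfl⟩, ⟨.inr (.inr (.inr (.inr (.inl ⟨v, j⟩)))), rfl⟩,
      ⟨.inr (.inr (.inr (.inr (.inr (D, w))))), rfl⟩])

variable (G : SimpleGraph V)

theorem tail_ne_gad (D D' : GadIdx V ℓ d) (w) : gadTail D ≠ .gad D' w := by
  cases D <;> simp [gadTail]

theorem head_ne_gad (D D' : GadIdx V ℓ d) (w) : gadHead D ≠ .gad D' w := by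
  cases D <;> simp [gadHead]

theorem adj_tail (D : GadIdx V ℓ d) : (graphH G ℓ d).Adj (.gad D .t) (gadTail D) :=
  ⟨(tail_ne_gad D D _).symm, Or.inr (by right; right; right; left; exact ⟨D, rfl, rfl⟩)⟩

theorem adj_head (D : GadIdx V ℓ d) : (graphH G ℓ d).Adj (gadHead D) (.gad D .h) :=
  ⟨(head_ne_gad D D _), Or.inl (by right; right; right; right; exact ⟨D, rfl, rfl⟩)⟩

theorem adj_tb (D : GadIdx V ℓ d) {w} (hw : w = .b1 ∨ w = .b2) :
    (graphH G ℓ d).Adj (.gad D w) (.gad D .t) := by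
  refine ⟨by rcases hw with rfl | rfl <;> simp, Or.inr (by right; left; refine ⟨D, rfl, ?_⟩; simpa using hw)⟩

theorem adj_hb (D : GadIdx V ℓ d) {w} (hw : w = .b1 ∨ w = .b2) :
    (graphH G ℓ d).Adj (.gad D .h) (.gad D w) := by
  refine ⟨by rcases hw with rfl | rfl <;> simp, Or.inl (by right; right; left; refine ⟨D, rfl, ?_⟩; simpa using hw)⟩

theorem adj_orig {u v : V} (h : G.Adj u v) :
    (graphH G ℓ d).Adj (.orig u) (.orig v) :=
  ⟨by simpa using h.ne, Or.inl (Or.inl ⟨u, v, h, rfl, rfl⟩)⟩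

variable [Finite V] {G} {τ : V → ℕ} {n : ℕ} {C : Set (HVert V ℓ d)}

theorem gad_mem (hC : ClosedUnder (graphH G ℓ d) (tauH τ n ℓ d) C) (D : GadIdx V ℓ d)
    (h : gadTail D ∈ C) (w) : .gad D w ∈ C := by
  have ht : HVert.gad D .t ∈ C :=
    hC.mem (ι := Unit) _ (fun _ => gadTail D) (fun _ _ _ => rfl) (fun _ => h)
      (fun _ => adj_tail G D) (by simp [tauH])
  have hb : ∀ w, w = .b1 ∨ w = .b2 → HVert.gad D w ∈ C := fun w hw =>
    hC.mem (ι := Unit) _ (fun _ => .gad D .t) (fun _ _ _ => rfl) (fun _ => ht)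
      (fun _ => adj_tb G D hw) (by rcases hw with rfl | rfl <;> simp [tauH])
  have hh : HVert.gad D .h ∈ C :=
    hC.mem (ι := Bool) _ (fun b => .gad D (if b then .b1 else .b2))
      (by intro a b; cases a <;> cases b <;> simp)
      (fun b => hb _ (by cases b <;> simp)) (fun b => adj_hb G D (by cases b <;> simp))
      (by simp [tauH])
  cases w
  exacts [ht, hh, hb _ (by simp), hb _ (by simp)]

/-- heads of gadgets -/
theorem head_mem (hC : ClosedUnder (graphH G ℓ d) (tauH τ n ℓ d) C) {ι : Type*} [Finite ι]
    (p : HVert V ℓ d) (g : ι → GadIdx V ℓ d) (hg : Function.Injective g)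
    (hh : ∀ i, gadHead (g i) = p) (ht : ∀ i, gadTail (g i) ∈ C)
    (hc : tauH τ n ℓ d p ≤ Nat.card ι) : p ∈ C :=
  hC.mem p (fun i => .gad (g i) .h) (fun a b h => hg (by simpa using h))
    (fun i => gad_mem hC _ (ht i) _) (fun i => by rw [← hh i]; exact adj_head G _) hc

theorem all_of_orig (hn : n ≤ Nat.card V)
    (hC : ClosedUnder (graphH G ℓ d) (tauH τ n ℓ d) C) (h : ∀ v, .orig v ∈ C) : ∀ p, p ∈ C := by
  have hx : ∀ i, .xx i ∈ C := fun i =>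
    head_mem hC _ (fun v => .vx v i) (fun a b h => by simpa using h) (fun _ => rfl) h hn
  have hy : ∀ i, .yy i ∈ C := fun i =>
    head_mem hC _ (fun v => .vy v i) (fun a b h => by simpa using h) (fun _ => rfl) h hn
  have ha : ∀ v j, .aa v j ∈ C := fun v j =>
    head_mem hC _ (fun i => .xa i v j) (fun a b h => by simpa using h) (fun _ => rfl) hx
      (by simp [tauH])
  have hb : ∀ v j, .bb v j ∈ C := fun v j =>
    head_mem hC _ (fun i => .yb i v j) (fun a b h => by simpa using h) (fun _ => rfl) hy
      (by simp [tauH])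
  have hg : ∀ D : GadIdx V ℓ d, gadTail D ∈ C := by
    rintro (_ | _ | _ | _ | _ | _)
    exacts [h _, hx _, ha _ _, h _, hy _, hb _ _]
  rintro (_ | _ | _ | _ | _ | _)
  exacts [h _, hx _, hy _, ha _ _, hb _ _, gad_mem hC _ (hg _) _]

theorem X_target (hn : n ≤ Nat.card V) (hτ : ∀ v, τ v ≤ d v) :
    IsTargetSet (graphH G ℓ d) (tauH τ n ℓ d) (XSet V ℓ d) := by
  rw [isTargetSet_iff]
  intro C hS hC
  apply all_of_orig hn hC
  have hx : ∀ i, .xx i ∈ C := fun i => hS ⟨i, rfl⟩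
  have ha : ∀ v j, .aa v j ∈ C := fun v j =>
    head_mem hC _ (fun i => .xa i v j) (fun a b h => by simpa using h) (fun _ => rfl) hx
      (by simp [tauH])
  intro v
  exact head_mem hC _ (fun j => .av v j) (fun a b h => by simpa using h) (fun _ => rfl) (ha v)
      (by simpa [tauH] using hτ v)

theorem Y_target (hn : n ≤ Nat.card V) (hτ : ∀ v, τ v ≤ d v) :
    IsTargetSet (graphH G ℓ d) (tauH τ n ℓ d) (YSet V ℓ d) := by
  rw [isTargetSet_iff]
  intro C hS hC
  apply all_of_orig hn hC
  have hx : ∀ i, .yy i ∈ C := fun i => hS ⟨i, rfl⟩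
  have ha : ∀ v j, .bb v j ∈ C := fun v j =>
    head_mem hC _ (fun i => .yb i v j) (fun a b h => by simpa using h) (fun _ => rfl) hx
      (by simp [tauH])
  intro v
  exact head_mem hC _ (fun j => .bv v j) (fun a b h => by simpa using h) (fun _ => rfl) (ha v)
      (by simpa [tauH] using hτ v)

theorem orig_target (hn : n ≤ Nat.card V) {S : Set V} (hS : IsTargetSet G τ S) :
    IsTargetSet (graphH G ℓ d) (tauH τ n ℓ d) (HVert.orig '' S) := by
  rw [isTargetSet_iff] at hS ⊢
  intro C hSC hC
  apply all_of_orig hn hC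
  apply hS (HVert.orig ⁻¹' C) (Set.image_subset_iff.1 hSC)
  intro v hv
  refine hC.mem (ι := ↥(G.neighborSet v ∩ HVert.orig ⁻¹' C)) _ (fun u => .orig u.1)
    (fun a b h => Subtype.ext (by simpa using h)) (fun u => u.2.2) (fun u => adj_orig G u.2.1) ?_
  simpa [tauH, Nat.card_coe_set_eq] using hv

/-- projection -/
def gpf : GadIdx V ℓ d → V ⊕ Fin ℓ ⊕ Fin ℓ
  | .vx v _ => .inl v
  | .xa i _ _ => .inr (.inl i)
  | .av v _ => .inl v
  | .vy v _ => .inl v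
  | .yb i _ _ => .inr (.inr i)
  | .bv v _ => .inl v

def pf : HVert V ℓ d → V ⊕ Fin ℓ ⊕ Fin ℓ
  | .orig v => .inl v
  | .xx i => .inr (.inl i)
  | .yy i => .inr (.inr i)
  | .aa v _ => .inl v
  | .bb v _ => .inl v
  | .gad D _ => gpf D

theorem pf_tail (D : GadIdx V ℓ d) : pf (gadTail D) = gpf D := by cases D <;> rfl

theorem adj_cases {p q : HVert V ℓ d} (h : (graphH G ℓ d).Adj p q) :
    (∃ u v, G.Adj u v ∧ p = .orig u ∧ q = .orig v) ∨
    (∃ D w w', p = .gad D w ∧ q = .gad D w') ∨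
    (∃ D, p = gadTail D ∧ q = .gad D .t) ∨
    (∃ D, p = .gad D .t ∧ q = gadTail D) ∨
    (∃ D, p = gadHead D ∧ q = .gad D .h) ∨
    (∃ D, p = .gad D .h ∧ q = gadHead D) := by
  obtain ⟨_, h | h⟩ := h
  · rcases h with h | ⟨D, rfl, rfl | rfl⟩ | ⟨D, rfl, rfl | rfl⟩ | ⟨D, h⟩ | ⟨D, h⟩
    · exact Or.inl h
    iterate 4 exact Or.inr (Or.inl ⟨_, _, _, rfl, rfl⟩)
    · exact Or.inr (Or.inr (Or.inl ⟨D, h⟩))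
    · exact Or.inr (Or.inr (Or.inr (Or.inr (Or.inl ⟨D, h⟩))))
  · rcases h with ⟨u, v, h, rfl, rfl⟩ | ⟨D, rfl, rfl | rfl⟩ | ⟨D, rfl, rfl | rfl⟩ | ⟨D, h⟩ | ⟨D, h⟩
    · exact Or.inl ⟨v, u, h.symm, rfl, rfl⟩
    iterate 4 exact Or.inr (Or.inl ⟨_, _, _, rfl, rfl⟩)
    · exact Or.inr (Or.inr (Or.inr (Or.inl ⟨D, h.symm⟩)))
    · exact Or.inr (Or.inr (Or.inr (Or.inr (Or.inr ⟨D, h.symm⟩))))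

theorem closed_pf (K : Set (V ⊕ Fin ℓ ⊕ Fin ℓ)) (hn : Nat.card V ≤ n)
    (hW : ClosedUnder G τ {v | .inl v ∈ K}) {v0 : V} (hv0 : .inl v0 ∉ K)
    {i0 : Fin ℓ} (hi0 : .inr (.inl i0) ∉ K) {j0 : Fin ℓ} (hj0 : .inr (.inr j0) ∉ K) :
    ClosedUnder (graphH G ℓ d) (tauH τ n ℓ d) (pf ⁻¹' K) := by
  intro p hp
  by_contra hpK
  have bound : ∀ (ι : Type _) [Finite ι] (A : Set ι) (g : ι → HVert V ℓ d),
      (graphH G ℓ d).neighborSet p ∩ pf ⁻¹' K ⊆ g '' A → tauH τ n ℓ d p ≤ A.ncard := by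
    intro ι _ A g h
    exact hp.trans ((Set.ncard_le_ncard h (Set.toFinite _)).trans (Set.ncard_image_le (Set.toFinite _)))
  have small : ∀ {ι : Type _} [Finite ι] {A : Set ι} {a : ι}, a ∉ A → A.ncard < Nat.card ι :=
    fun h => Set.ncard_lt_card (fun hA => h (hA ▸ Set.mem_univ _))
  -- tail-adjacent and common reductions
  have key : ∀ q, (graphH G ℓ d).Adj p q → pf q ∈ K →
      (∃ u v, G.Adj u v ∧ p = .orig u ∧ q = .orig v) ∨
      (∃ D, p = gadHead D ∧ q = .gad D .h ∧ gpf D ∈ K) ∨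
      (∃ D, p = .gad D .h ∧ q = gadHead D) := by
    intro q h hq
    rcases adj_cases h with h | ⟨D, w, w', rfl, rfl⟩ | ⟨D, rfl, rfl⟩ | ⟨D, rfl, rfl⟩ | ⟨D, h5, rfl⟩ | h
    · exact Or.inl h
    · exact absurd hq hpK
    · refine absurd ?_ hpK
      rw [Set.mem_preimage, pf_tail]; exact hq
    · refine absurd ?_ hpK
      rw [pf_tail] at hq; exact hq
    · exact Or.inr (Or.inl ⟨D, h5, rfl, hq⟩)
    · exact Or.inr (Or.inr h)
  rcases p with v | i | i | ⟨v, j⟩ | ⟨v, j⟩ | ⟨D, w⟩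
  · apply hpK
    refine hW v (show tauH τ n ℓ d (.orig v) ≤ _ from bound V (G.neighborSet v ∩ {v | Sum.inl v ∈ K}) .orig ?_)
    rintro q ⟨h, hq⟩
    rcases key q h hq with ⟨u, v', ha, h1, rfl⟩ | ⟨D, h1, rfl, hK⟩ | ⟨D, h1, rfl⟩
    · cases h1
      exact ⟨v', ⟨ha, hq⟩, rfl⟩
    · exfalso
      cases D <;> simp [gadHead] at h1 <;> subst h1 <;> exact hpK hK
    · cases h1
  · have := bound V {v | .inl v ∈ K} (fun v => .gad (.vx v i) .h) (by
      rintro q ⟨h, hq⟩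
      rcases key q h hq with ⟨u, v', ha, h1, rfl⟩ | ⟨D, h1, rfl, hK⟩ | ⟨D, h1, rfl⟩
      · cases h1
      · cases D <;> simp [gadHead] at h1
        subst h1
        exact ⟨_, hK, rfl⟩
      · cases h1)
    have h2 := small (A := {v : V | Sum.inl v ∈ K}) (a := v0) hv0
    simp only [tauH] at this
    omega
  · have := bound V {v | .inl v ∈ K} (fun v => .gad (.vy v i) .h) (by
      rintro q ⟨h, hq⟩
      rcases key q h hq with ⟨u, v', ha, h1, rfl⟩ | ⟨D, h1, rfl, hK⟩ | ⟨D, h1, rfl⟩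
      · cases h1
      · cases D <;> simp [gadHead] at h1
        subst h1
        exact ⟨_, hK, rfl⟩
      · cases h1)
    have h2 := small (A := {v : V | Sum.inl v ∈ K}) (a := v0) hv0
    simp only [tauH] at this
    omega
  · have hs : tauH τ n ℓ d (.aa v j) ≤ {i | .inr (.inl i) ∈ K}.ncard :=
      hp.trans ((Set.ncard_le_ncard (t := (fun i => .gad (.xa i v j) .h) '' {i | .inr (.inl i) ∈ K}) (by
        rintro q ⟨h, hq⟩
        rcases key q h hq with ⟨u, v', ha, h1, rfl⟩ | ⟨D, h1, rfl, hK⟩ | ⟨D, h1, rfl⟩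
        · cases h1
        · cases D <;> simp [gadHead] at h1
          obtain ⟨rfl, h1⟩ := h1
          cases h1
          exact ⟨_, hK, rfl⟩
        · cases h1) (Set.toFinite _)).trans (Set.ncard_image_le (Set.toFinite _)))
    have := Set.ncard_lt_card (s := {i : Fin ℓ | .inr (.inl i) ∈ K}) (fun hA => hi0 (hA ▸ Set.mem_univ i0 :))
    simp [tauH] at hs this
    omega
  · have hs : tauH τ n ℓ d (.bb v j) ≤ {i | .inr (.inr i) ∈ K}.ncard :=
      hp.trans ((Set.ncard_le_ncard (t := (fun i => .gad (.yb i v j) .h) '' {i | .inr (.inr i) ∈ K}) (by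
        rintro q ⟨h, hq⟩
        rcases key q h hq with ⟨u, v', ha, h1, rfl⟩ | ⟨D, h1, rfl, hK⟩ | ⟨D, h1, rfl⟩
        · cases h1
        · cases D <;> simp [gadHead] at h1
          obtain ⟨rfl, h1⟩ := h1
          cases h1
          exact ⟨_, hK, rfl⟩
        · cases h1) (Set.toFinite _)).trans (Set.ncard_image_le (Set.toFinite _)))
    have := Set.ncard_lt_card (s := {i : Fin ℓ | .inr (.inr i) ∈ K}) (fun hA => hj0 (hA ▸ Set.mem_univ j0 :))
    simp [tauH] at hs this
    omega
  · have hsub : (graphH G ℓ d).neighborSet (.gad D w) ∩ pf ⁻¹' K ⊆ {q | w = .h ∧ q = gadHead D} := by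
      rintro q ⟨h, hq⟩
      rcases key q h hq with ⟨u, v', ha, h1, rfl⟩ | ⟨D, h1, rfl, hK⟩ | ⟨D, h1, rfl⟩
      · cases h1
      · exact absurd h1.symm (head_ne_gad _ _ _)
      · cases h1
        exact ⟨rfl, rfl⟩
    have := hp.trans (Set.ncard_le_ncard hsub (Set.toFinite _))
    cases w <;> simp [tauH] at this

theorem target_proj (hn : Nat.card V ≤ n) {S : Set (HVert V ℓ d)}
    (hS : IsTargetSet (graphH G ℓ d) (tauH τ n ℓ d) S)
    {i0 : Fin ℓ} (hi0 : .inr (.inl i0) ∉ pf '' S) {j0 : Fin ℓ} (hj0 : .inr (.inr j0) ∉ pf '' S) :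
    IsTargetSet G τ {v | .inl v ∈ pf '' S} := by
  rw [isTargetSet_iff] at hS ⊢
  intro W hW hWc
  by_contra! hv
  obtain ⟨v0, hv0⟩ := hv
  let K : Set (V ⊕ Fin ℓ ⊕ Fin ℓ) := fun s => Sum.elim (fun v => v ∈ W) (fun t => .inr t ∈ pf '' S) s
  have := hS (pf ⁻¹' K) (by
      intro p hp
      have h1 : pf p ∈ pf '' S := ⟨p, hp, rfl⟩
      change pf p ∈ K
      generalize pf p = s at h1
      cases s with
      | inl v => exact hW h1
      | inr t => exact h1)
    (closed_pf K hn hWc (v0 := v0) hv0 (i0 := i0) hi0 (j0 := j0) hj0) (.orig v0)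
  exact hv0 this

end H

theorem exists_drop (P : ℕ → Prop) (T : ℕ) (h0 : P 0) (hT : ¬ P T) :
    ∃ t < T, P t ∧ ¬ P (t + 1) := by
  induction T with
  | zero => exact absurd h0 hT
  | succ T ih =>
    by_cases h : P T
    · exact ⟨T, by omega, h, hT⟩
    · obtain ⟨t, ht, h⟩ := ih h
      exact ⟨t, by omega, h⟩

theorem symm_one {U : Type*} {A B : Set U} (h : (symmDiff A B).ncard = 1) : A ⊆ B ∨ B ⊆ A := by
  obtain ⟨x, hx⟩ := Set.ncard_eq_one.1 h
  by_contra! hc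
  obtain ⟨h1, h2⟩ := hc
  obtain ⟨a, ha, ha'⟩ := Set.not_subset.1 h1
  obtain ⟨b, hb, hb'⟩ := Set.not_subset.1 h2
  have e1 : a ∈ symmDiff A B := Or.inl ⟨ha, ha'⟩
  have e2 : b ∈ symmDiff A B := Or.inr ⟨hb, hb'⟩
  rw [hx] at e1 e2
  rw [Set.mem_singleton_iff] at e1 e2
  subst e1 e2
  exact ha' hb

theorem exists_opt {V : Type*} (G : SimpleGraph V) (τ : V → ℕ) :
    ∃ S : Set V, IsTargetSet G τ S ∧ S.ncard = optTS G τ := by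
  apply Nat.sInf_mem (s := { m | ∃ S : Set V, IsTargetSet G τ S ∧ S.ncard = m })
  refine ⟨_, Set.univ, ?_, rfl⟩
  exact Set.eq_univ_of_forall fun v => Set.mem_iUnion.2 ⟨0, trivial⟩

theorem exists_seq {V : Type*} [Finite V] (G : SimpleGraph V) (τ : V → ℕ) (ℓ n : ℕ) (d : V → ℕ)
    (hn : n = Nat.card V) (hτ : ∀ v, τ v ≤ d v) :
    ∃ T F, IsReconfSeq (graphH G ℓ d) (tauH τ n ℓ d) (XSet V ℓ d) (YSet V ℓ d) T F ∧
      ∀ t ≤ T, (F t).ncard ≤ optTS G τ + ℓ := by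
  obtain ⟨S, hS, hc⟩ := exists_opt G τ
  have hX := X_target (G := G) (ℓ := ℓ) hn.le hτ
  have hY := Y_target (G := G) (ℓ := ℓ) hn.le hτ
  have hO := orig_target (ℓ := ℓ) (d := d) hn.le hS
  have cX : (XSet V ℓ d).ncard = ℓ := by
    rw [XSet, Set.ncard_range_of_injective (fun a b h => by simpa using h)]; simp
  have cY : (YSet V ℓ d).ncard = ℓ := by
    rw [YSet, Set.ncard_range_of_injective (fun a b h => by simpa using h)]; simp
  have cO : (HVert.orig '' S : Set (HVert V ℓ d)).ncard ≤ optTS G τ :=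
    hc ▸ Set.ncard_image_le (Set.toFinite _)
  have c1 : (XSet V ℓ d ∪ HVert.orig '' S).ncard ≤ optTS G τ + ℓ :=
    (Set.ncard_union_le _ _).trans (by omega)
  have c2 : (YSet V ℓ d ∪ HVert.orig '' S).ncard ≤ optTS G τ + ℓ :=
    (Set.ncard_union_le _ _).trans (by omega)
  have sy : ∀ {A B}, Relation.ReflTransGen (RStep (graphH G ℓ d) (tauH τ n ℓ d) (optTS G τ + ℓ)) A B →
      Relation.ReflTransGen (RStep (graphH G ℓ d) (tauH τ n ℓ d) (optTS G τ + ℓ)) B A := by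
    intro A B h
    induction h with
    | refl => exact .refl
    | tail _ h ih => exact .head h.symm ih
  apply reach_seq hX (by omega)
  exact ((reach_up _ hX _ _ Set.subset_union_left c1 rfl).trans
    (sy (reach_up _ hO _ _ Set.subset_union_right c1 rfl))).trans
    ((reach_up _ hO _ _ Set.subset_union_right c2 rfl).trans
    (sy (reach_up _ hY _ _ Set.subset_union_left c2 rfl)))

theorem sound {V : Type*} [Finite V] (G : SimpleGraph V) (τ : V → ℕ) (ℓ n ks : ℕ) (d : V → ℕ)
    (hn : n = Nat.card V) (hℓ : ks < ℓ) (hopt : ks < optTS G τ) {T : ℕ} {F : ℕ → Set (HVert V ℓ d)}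
    (hF : IsReconfSeq (graphH G ℓ d) (tauH τ n ℓ d) (XSet V ℓ d) (YSet V ℓ d) T F) :
    ∃ t ≤ T, ks + ℓ < (F t).ncard := by
  obtain ⟨t, ht, h1, h2⟩ := exists_drop
    (fun t => ∀ i : Fin ℓ, (Sum.inr (.inl i) : V ⊕ Fin ℓ ⊕ Fin ℓ) ∈ pf '' F t) T
    (by
      rw [hF.head]
      exact fun i => ⟨.xx i, ⟨i, rfl⟩, rfl⟩)
    (by
      rw [hF.last]
      intro h
      obtain ⟨_, ⟨j, rfl⟩, h⟩ := h ⟨0, by omega⟩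
      simp [pf] at h)
  push Not at h2
  obtain ⟨i0, hi0⟩ := h2
  have hsub : F (t + 1) ⊆ F t := by
    rcases symm_one (hF.step t ht) with h | h
    · exact absurd (Set.image_mono h (h1 i0)) hi0
    · exact h
  refine ⟨t, ht.le, ?_⟩
  refine lt_of_lt_of_le ?_ (Set.ncard_image_le (f := pf) (Set.toFinite (F t)))
  have inX : Function.Injective (fun i : Fin ℓ => (Sum.inr (.inl i) : V ⊕ Fin ℓ ⊕ Fin ℓ)) :=
    fun a b h => by simpa using h
  by_cases hy : ∀ j : Fin ℓ, (Sum.inr (.inr j) : V ⊕ Fin ℓ ⊕ Fin ℓ) ∈ pf '' F t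
  · have : (Set.range (Sum.inr : Fin ℓ ⊕ Fin ℓ → V ⊕ Fin ℓ ⊕ Fin ℓ)).ncard ≤ (pf '' F t).ncard := by
      apply Set.ncard_le_ncard _ (Set.toFinite _)
      rintro _ ⟨i | j, rfl⟩
      exacts [h1 i, hy j]
    rw [Set.ncard_range_of_injective Sum.inr_injective] at this
    simp at this
    omega
  · push Not at hy
    obtain ⟨j0, hj0⟩ := hy
    have htar := target_proj hn.ge (hF.target (t + 1) ht) hi0 (j0 := j0)
      (fun h => hj0 (Set.image_mono hsub h))
    have hle : optTS G τ ≤ _ := Nat.sInf_le ⟨_, htar, rfl⟩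
    set P := {v | (Sum.inl v : V ⊕ Fin ℓ ⊕ Fin ℓ) ∈ pf '' F (t + 1)} with hP
    have hu : (Sum.inl '' P ∪ Set.range (fun i : Fin ℓ => (Sum.inr (.inl i) : V ⊕ Fin ℓ ⊕ Fin ℓ))).ncard
        ≤ (pf '' F t).ncard := by
      apply Set.ncard_le_ncard _ (Set.toFinite _)
      rintro _ (⟨v, hv, rfl⟩ | ⟨i, rfl⟩)
      exacts [Set.image_mono hsub hv, h1 i]
    rw [Set.ncard_union_eq (by
        rw [Set.disjoint_left]
        rintro _ ⟨v, _, rfl⟩ ⟨i, h⟩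
        simp at h) (Set.toFinite _) (Set.toFinite _), Set.ncard_image_of_injective _ Sum.inl_injective,
      Set.ncard_range_of_injective inX] at hu
    simp at hu
    omega

end TSS

open TSS in
/-- The gap-preserving reduction: for `ℓ > k_s ≥ k_c`, completeness (`opt(G) ≤ k_c` implies
`opt_H(X ⇝ Y) ≤ k_c + ℓ`) and soundness (`opt(G) > k_s` implies `opt_H(X ⇝ Y) > k_s + ℓ`). -/
theorem stmt14 {V : Type*} [Fintype V] (G : SimpleGraph V) [DecidableRel G.Adj] (τ : V → ℕ)
    (kc ks ℓ : ℕ) (hks : kc ≤ ks) (hℓ : ks < ℓ)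
    (hiso : ∀ v : V, 0 < G.degree v) (hτ : ∀ v : V, τ v ≤ G.degree v) :
    (optTS G τ ≤ kc →
      optReconf (graphH G ℓ (fun v => G.degree v)) (tauH τ (Fintype.card V) ℓ (fun v => G.degree v))
        (XSet V ℓ (fun v => G.degree v)) (YSet V ℓ (fun v => G.degree v)) ≤ kc + ℓ) ∧
    (ks < optTS G τ →
      ks + ℓ < optReconf (graphH G ℓ (fun v => G.degree v)) (tauH τ (Fintype.card V) ℓ (fun v => G.degree v))
        (XSet V ℓ (fun v => G.degree v)) (YSet V ℓ (fun v => G.degree v))) := by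
  have hn : Fintype.card V = Nat.card V := Nat.card_eq_fintype_card.symm
  obtain ⟨T, F, hF, hb⟩ := exists_seq G τ ℓ _ (fun v => G.degree v) hn hτ
  refine ⟨fun h => (optReconf_le hF hb).trans (by omega), fun h => ?_⟩
  unfold optReconf
  obtain ⟨T', F', hF', hm⟩ := Nat.sInf_mem (s := { m | ∃ T Sfam, IsReconfSeq
    (graphH G ℓ (fun v => G.degree v)) (tauH τ (Fintype.card V) ℓ (fun v => G.degree v))
    (XSet V ℓ (fun v => G.degree v)) (YSet V ℓ (fun v => G.degree v)) T Sfam ∧ seqSize T Sfam = m })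
    ⟨_, T, F, hF, rfl⟩
  rw [← hm]
  obtain ⟨t, ht, hlt⟩ := sound G τ ℓ _ ks _ hn hℓ h hF'
  refine hlt.trans_le ?_
  unfold seqSize
  exact Finset.le_sup (f := fun t => (F' t).ncard) (by simpa [Nat.lt_succ_iff] using ht)
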